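/- In a consecutive transition, a moving label whose movement is non-diagonal (its start and end positions share an edge) overlaps at most 12 other labels during the entire transition. -/

import Mathlib

open Set

/-- The closed axis-aligned unit square with lower-left corner `a`. -/
def unitSq (a : ℝ × ℝ) : Set (ℝ × ℝ) :=
  Set.Icc a.1 (a.1 + 1) ×ˢ Set.Icc a.2 (a.2 + 1)

/-- Two unit squares, given by their lower-left corners, overlap if their interiors intersect. -/
def Overlap (a b : ℝ × ℝ) : Prop :=
  (interior (unitSq a) ∩ interior (unitSq b)).Nonempty

/-- `a` is the lower-left corner of one of the four candidate positions of point `p`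
(the four closed unit squares having `p` as a corner). -/
def IsCandidate (p a : ℝ × ℝ) : Prop :=
  a = p ∨ a = (p.1 - 1, p.2) ∨ a = (p.1, p.2 - 1) ∨ a = (p.1 - 1, p.2 - 1)

/-- Two unit squares (given by lower-left corners) share an edge. -/
def SharesEdge (a b : ℝ × ℝ) : Prop :=
  (a.1 = b.1 ∧ (a.2 - b.2 = 1 ∨ b.2 - a.2 = 1)) ∨
  (a.2 = b.2 ∧ (a.1 - b.1 = 1 ∨ b.1 - a.1 = 1))

/-- A movement of the unit-square label of point `p` from candidate position `S` to candidate
position `E`.  If `S` and `E` share an edge (a non-diagonal movement) we set `I = E` and the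
label translates directly from `S` to `E`; if `S` and `E` are diagonally opposite (a diagonal
movement) the label translates through the specified intermediate candidate position `I`,
which shares an edge with both `S` and `E`. -/
structure Movement where
  p : ℝ × ℝ
  S : ℝ × ℝ
  I : ℝ × ℝ
  E : ℝ × ℝ
  candS : IsCandidate p S
  candI : IsCandidate p I
  candE : IsCandidate p E
  legs : (I = E ∧ SharesEdge S E) ∨
    (SharesEdge S I ∧ SharesEdge I E ∧ S.1 ≠ E.1 ∧ S.2 ≠ E.2)

/-- A movement is diagonal if the start and end positions are diagonally opposite
(equivalently, the intermediate position differs from the end position). -/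
def Movement.Diagonal (m : Movement) : Prop := m.I ≠ m.E

/-- Position (lower-left corner) of a moving label at time `t` after the start of its movement:
unit-speed axis-aligned translation, one unit of time per axis-aligned leg; the label rests at
its start position before the movement begins and at its end position after it is finished. -/
noncomputable def Movement.pos (m : Movement) (t : ℝ) : ℝ × ℝ :=
  if t ≤ 0 then m.S
  else if t ≤ 1 then m.S + t • (m.I - m.S)
  else if t ≤ 2 then m.I + (t - 1) • (m.E - m.I)
  else m.E

/-- Duration of a movement: one unit of time per axis-aligned translation. -/
noncomputable def Movement.dur (m : Movement) : ℝ := if m.I = m.E then 1 else 2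

/-- A transition instance: finitely many stationary labels (given by their lower-left corners)
and `n` moving labels, each with a prescribed movement, such that the labeling `L₁` formed by
the stationary labels together with the start positions of the moving labels is overlap-free,
and the labeling `L₂` formed by the stationary labels together with the end positions of the
moving labels is overlap-free. -/
structure TransitionInstance (k n : ℕ) where
  stat : Fin k → ℝ × ℝ
  mov : Fin n → Movement
  free_start : ∀ a b : Fin k ⊕ Fin n, a ≠ b →
    ¬ Overlap (Sum.elim stat (fun j => (mov j).S) a)
      (Sum.elim stat (fun j => (mov j).S) b)
  free_end : ∀ a b : Fin k ⊕ Fin n, a ≠ b →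
    ¬ Overlap (Sum.elim stat (fun j => (mov j).E) a)
      (Sum.elim stat (fun j => (mov j).E) b)

/-- A schedule `τ` of starting times is consecutive if the execution intervals of the movements
are pairwise non-overlapping, i.e. the movements are executed one after another in some order. -/
def Consecutive {k n : ℕ} (T : TransitionInstance k n) (τ : Fin n → ℝ) : Prop :=
  ∀ i j : Fin n, i ≠ j →
    τ i + (T.mov i).dur ≤ τ j ∨ τ j + (T.mov j).dur ≤ τ i

/-- Position (lower-left corner) of each label at global time `t`, when moving label `j`
starts its movement at time `τ j`; stationary labels never move. -/
noncomputable def traj {k n : ℕ} (T : TransitionInstance k n) (τ : Fin n → ℝ) (t : ℝ) :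
    Fin k ⊕ Fin n → ℝ × ℝ :=
  Sum.elim T.stat (fun j => (T.mov j).pos (t - τ j))

/-- The number of overlaps during the transition: the number of unordered pairs of distinct
labels whose interiors intersect at some moment. -/
noncomputable def overlapCount {k n : ℕ} (T : TransitionInstance k n) (τ : Fin n → ℝ) : ℕ :=
  Set.ncard {q : Sym2 (Fin k ⊕ Fin n) | ∃ a b : Fin k ⊕ Fin n,
    q = s(a, b) ∧ a ≠ b ∧ ∃ t : ℝ, Overlap (traj T τ t a) (traj T τ t b)}

/-!
Unit squares overlap iff their corners are at distance less than `1` in the sup metric of `ℝ × ℝ`.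
Let a label slide from `A` to a position `B` sharing an edge with `A`. Any other label overlapping
it starts or ends in the corridor of squares hit by sliding along `AB` prolonged by one unit at
both ends: either that label is at rest when the overlap occurs, or it overlaps `A` or `B` while
moving. In the latter case its start, intermediate or end position overlaps `A` or `B`, and if it is
the intermediate one, then the start or the end is reached from it by a translation along `AB`.

The corridor has size `5 × 2`, and outside the squares overlapping `A` it splits into six cells,
each of them too small for the corners of two non-overlapping squares. Hence at most six labels
start in the corridor and, exchanging `A` and `B`, at most six end there.
-/

lemma unitSq_eq_closedBall (a : ℝ × ℝ) :
    unitSq a = Metric.closedBall (a + (1 / 2, 1 / 2)) (1 / 2) := by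
  rw [← closedBall_prod_same, Real.closedBall_eq_Icc, Real.closedBall_eq_Icc, unitSq]
  simp only [Prod.fst_add, Prod.snd_add, add_sub_cancel_right, add_assoc, add_halves]

lemma overlap_iff_dist_lt_one {a b : ℝ × ℝ} : Overlap a b ↔ dist a b < 1 := by
  rw [Overlap, ← not_disjoint_iff_nonempty_inter, unitSq_eq_closedBall, unitSq_eq_closedBall,
    interior_closedBall _ (by norm_num), interior_closedBall _ (by norm_num),
    disjoint_ball_ball_iff (by norm_num) (by norm_num), dist_add_right, add_halves, not_le]

lemma overlap_iff_abs_sub_lt_one {a b : ℝ × ℝ} :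
    Overlap a b ↔ |a.1 - b.1| < 1 ∧ |a.2 - b.2| < 1 := by
  rw [overlap_iff_dist_lt_one, Prod.dist_eq, max_lt_iff, Real.dist_eq, Real.dist_eq]

lemma overlap_add_right_iff {a b v : ℝ × ℝ} : Overlap (a + v) (b + v) ↔ Overlap a b := by
  simp only [overlap_iff_dist_lt_one, dist_add_right]

lemma SharesEdge.symm {a b : ℝ × ℝ} (h : SharesEdge a b) : SharesEdge b a := by
  unfold SharesEdge at *
  grind

lemma abs_sub_lt_one_or_of_mem_uIcc {a b q r : ℝ} (hab : |a - b| = 1) (hq : q ∈ uIcc a b)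
    (hr : |q - r| < 1) : |a - r| < 1 ∨ |b - r| < 1 := by
  rw [mem_uIcc] at hq
  grind

lemma SharesEdge.overlap_or_of_mem_segment {a b q r : ℝ × ℝ} (hab : SharesEdge a b)
    (hq : q ∈ segment ℝ a b) (hr : Overlap q r) : Overlap a r ∨ Overlap b r := by
  obtain ⟨hq₁, hq₂⟩ := Prod.segment_subset a b hq
  rw [segment_eq_uIcc] at hq₁ hq₂
  simp only [overlap_iff_abs_sub_lt_one] at hr ⊢
  rcases hab with ⟨h, h'⟩ | ⟨h, h'⟩
  · rw [h, uIcc_self, mem_singleton_iff] at hq₁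
    have := abs_sub_lt_one_or_of_mem_uIcc (by grind) hq₂ hr.2
    grind
  · rw [h, uIcc_self, mem_singleton_iff] at hq₂
    have := abs_sub_lt_one_or_of_mem_uIcc (by grind) hq₁ hr.1
    grind

/-- The corridor of a translation from `a` to `b`: the positions of all unit squares overlapping a
square that slides along the line from `a` to `b`, prolonged by the length of the translation at
both ends. -/
def corridor (a b : ℝ × ℝ) : Set (ℝ × ℝ) :=
  {q | ∃ t ∈ Icc (-1 : ℝ) 2, Overlap q (AffineMap.lineMap a b t)}

lemma corridor_comm (a b : ℝ × ℝ) : corridor a b = corridor b a := by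
  have swap_subset (a b : ℝ × ℝ) : corridor a b ⊆ corridor b a := by
    rintro q ⟨t, ⟨ht₀, ht₁⟩, hq⟩
    exact ⟨1 - t, ⟨by linarith, by linarith⟩, by rwa [AffineMap.lineMap_apply_one_sub]⟩
  exact (swap_subset a b).antisymm (swap_subset b a)

lemma mem_corridor_of_overlap_of_mem_segment {a b p q : ℝ × ℝ} (hp : p ∈ segment ℝ a b)
    (hq : Overlap q p) : q ∈ corridor a b := by
  rw [segment_eq_image_lineMap] at hp
  obtain ⟨t, ⟨ht₀, ht₁⟩, rfl⟩ := hp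
  exact ⟨t, ⟨by linarith, by linarith⟩, hq⟩

lemma mem_corridor_of_overlap_left {a b q : ℝ × ℝ} (hq : Overlap q a) : q ∈ corridor a b :=
  mem_corridor_of_overlap_of_mem_segment (left_mem_segment ℝ a b) hq

lemma add_sub_mem_corridor_of_overlap {a b q : ℝ × ℝ} (hq : Overlap q a) :
    q + (b - a) ∈ corridor a b := by
  refine ⟨1, ⟨by norm_num, by norm_num⟩, ?_⟩
  rwa [AffineMap.lineMap_apply_module', one_smul, add_comm _ a, overlap_add_right_iff]

lemma sub_sub_mem_corridor_of_overlap {a b q : ℝ × ℝ} (hq : Overlap q a) :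
    q - (b - a) ∈ corridor a b := by
  refine ⟨-1, ⟨by norm_num, by norm_num⟩, ?_⟩
  rwa [AffineMap.lineMap_apply_module', neg_one_smul, neg_add_eq_sub, sub_eq_add_neg q,
    sub_eq_add_neg a, overlap_add_right_iff]

lemma SharesEdge.exists_isometry_lineMap_eq {a b : ℝ × ℝ} (hab : SharesEdge a b) :
    ∃ φ : ℝ × ℝ → ℝ × ℝ, Isometry φ ∧ ∀ t : ℝ, φ (AffineMap.lineMap a b t) = (t, 0) := by
  have isometry_reflect {σ : ℝ} (hσ : |σ| = 1) (o : ℝ × ℝ) :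
      Isometry fun q : ℝ × ℝ => (σ * (q.1 - o.1), q.2 - o.2) :=
    Isometry.of_dist_eq fun p q => by
      simp only [Prod.dist_eq, Real.dist_eq, ← mul_sub, sub_sub_sub_cancel_right, abs_mul, hσ,
        one_mul]
  have isometry_swap : Isometry (Prod.swap : ℝ × ℝ → ℝ × ℝ) :=
    Isometry.of_dist_eq fun p q => by
      simp only [Prod.dist_eq, Prod.fst_swap, Prod.snd_swap, max_comm]
  rcases hab with ⟨h, h'⟩ | ⟨h, h'⟩
  · refine ⟨_, (isometry_reflect (σ := b.2 - a.2) (by grind) a.swap).comp isometry_swap,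
      fun t => ?_⟩
    simp only [AffineMap.lineMap_apply_module', Function.comp_apply, Prod.fst_swap, Prod.snd_swap,
      Prod.fst_add, Prod.snd_add, Prod.smul_fst, Prod.smul_snd, Prod.fst_sub, Prod.snd_sub,
      smul_eq_mul, Prod.mk.injEq]
    grind
  · refine ⟨_, isometry_reflect (σ := b.1 - a.1) (by grind) a, fun t => ?_⟩
    simp only [AffineMap.lineMap_apply_module', Prod.fst_add, Prod.snd_add, Prod.smul_fst,
      Prod.smul_snd, Prod.fst_sub, Prod.snd_sub, smul_eq_mul, Prod.mk.injEq]
    grind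

lemma corridor_zero_one_subset :
    corridor (0, 0) (1, 0) ⊆ Ioo (-2) 3 ×ˢ Ioo (-1) 1 := by
  rintro ⟨u, v⟩ ⟨t, ⟨ht₀, ht₁⟩, hq⟩
  simp only [overlap_iff_abs_sub_lt_one, AffineMap.lineMap_apply_module', Prod.mk_sub_mk, sub_zero,
    Prod.smul_mk, smul_eq_mul, mul_one, mul_zero, Prod.mk_add_mk, add_zero, abs_lt] at hq
  constructor <;> constructor <;> linarith [hq.1.1, hq.1.2, hq.2.1, hq.2.2]

/-- The cell of a point in the partition of the plane by two vertical lines and the horizontal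
axis. Outside the unit ball around the origin, the corridor from `(0, 0)` to `(1, 0)` has the
columns `(-2, -1]`, `[1, 2)`, `[2, 3)` and the rows `(-1, 0)`, `[0, 1)`, so that squares positioned
in the same cell overlap. -/
noncomputable def cell (q : ℝ × ℝ) : Fin 3 × Bool :=
  (if q.1 ≤ -1 then 0 else if q.1 < 2 then 1 else 2, decide (0 ≤ q.2))

lemma overlap_of_cell_eq {p q : ℝ × ℝ} (hp : p ∈ corridor (0, 0) (1, 0))
    (hq : q ∈ corridor (0, 0) (1, 0)) (hp₀ : ¬ Overlap p (0, 0)) (hq₀ : ¬ Overlap q (0, 0))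
    (hpq : cell p = cell q) : Overlap p q := by
  obtain ⟨⟨_, _⟩, ⟨_, _⟩⟩ := corridor_zero_one_subset hp
  obtain ⟨⟨_, _⟩, ⟨_, _⟩⟩ := corridor_zero_one_subset hq
  simp only [overlap_iff_abs_sub_lt_one, sub_zero, cell, Prod.mk.injEq, decide_eq_decide] at *
  obtain ⟨hcol, hrow⟩ := hpq
  have hp₁ : 1 ≤ |p.1| := by grind
  have hq₁ : 1 ≤ |q.1| := by grind
  refine ⟨?_, by grind⟩
  rw [le_abs'] at hp₁ hq₁
  rw [abs_sub_lt_iff]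
  split_ifs at hcol <;> grind

lemma encard_le_six_of_mem_corridor {ι : Type*} {a b : ℝ × ℝ} {x : ι → ℝ × ℝ} {s : Set ι}
    (hab : SharesEdge a b) (hmem : ∀ i ∈ s, x i ∈ corridor a b) (hfree : ∀ i ∈ s, ¬ Overlap (x i) a)
    (hpair : s.Pairwise fun i j => ¬ Overlap (x i) (x j)) : s.encard ≤ 6 := by
  obtain ⟨φ, hφ, hφline⟩ := hab.exists_isometry_lineMap_eq
  have overlap_map_iff (p q : ℝ × ℝ) : Overlap (φ p) (φ q) ↔ Overlap p q := by
    simp only [overlap_iff_dist_lt_one, hφ.dist_eq]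
  have hφa : φ a = (0, 0) := by simpa using hφline 0
  have hφmem (i) (hi : i ∈ s) : φ (x i) ∈ corridor (0, 0) (1, 0) := by
    obtain ⟨t, ht, hoverlap⟩ := hmem i hi
    refine ⟨t, ht, ?_⟩
    rw [← overlap_map_iff, hφline] at hoverlap
    simpa [AffineMap.lineMap_apply] using hoverlap
  have hφfree (i) (hi : i ∈ s) : ¬ Overlap (φ (x i)) (0, 0) := by
    rw [← hφa, overlap_map_iff]
    exact hfree i hi
  have hinj : InjOn (fun i => cell (φ (x i))) s := by
    intro i hi j hj hij
    by_contra hne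
    exact hpair hi hj hne <| (overlap_map_iff _ _).1 <|
      overlap_of_cell_eq (hφmem i hi) (hφmem j hj) (hφfree i hi) (hφfree j hj) hij
  calc s.encard ≤ (univ : Set (Fin 3 × Bool)).encard :=
        encard_le_encard_of_injOn (mapsTo_univ _ _) hinj
    _ = 6 := by simp

namespace Movement

variable (m : Movement)

lemma sharesEdge_start_mid : SharesEdge m.S m.I := by
  rcases m.legs with ⟨h, hSE⟩ | ⟨hSI, -⟩
  · rwa [h]
  · exact hSI

lemma pos_of_nonpos {t : ℝ} (ht : t ≤ 0) : m.pos t = m.S :=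
  if_pos ht

lemma pos_of_dur_le {t : ℝ} (ht : m.dur ≤ t) : m.pos t = m.E := by
  unfold dur at ht
  unfold pos
  split_ifs at ht with hIE
  · rcases ht.eq_or_lt with rfl | ht
    · norm_num [hIE]
    · rw [if_neg (by linarith), if_neg (by linarith), hIE, sub_self, smul_zero, add_zero, ite_self]
  · rcases ht.eq_or_lt with rfl | ht
    · norm_num
    · rw [if_neg (by linarith), if_neg (by linarith), if_neg (by linarith)]

lemma pos_mem_segment_union (t : ℝ) : m.pos t ∈ segment ℝ m.S m.I ∪ segment ℝ m.I m.E := by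
  unfold pos
  split_ifs with h₀ h₁ h₂
  · exact .inl (left_mem_segment ℝ _ _)
  · rw [segment_eq_image', segment_eq_image']
    exact .inl ⟨t, ⟨by linarith, h₁⟩, rfl⟩
  · rw [segment_eq_image', segment_eq_image']
    exact .inr ⟨t - 1, ⟨by linarith, by linarith⟩, rfl⟩
  · exact .inr (right_mem_segment ℝ _ _)

lemma pos_mem_segment (hm : m.I = m.E) (t : ℝ) : m.pos t ∈ segment ℝ m.S m.E := by
  have hpos := m.pos_mem_segment_union t
  rwa [hm, segment_same, union_singleton, insert_eq_of_mem (right_mem_segment ℝ _ _)] at hpos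

variable {m}

lemma overlap_or_of_overlap_pos {t : ℝ} {r : ℝ × ℝ} (h : Overlap (m.pos t) r) :
    Overlap m.S r ∨ Overlap m.I r ∨ Overlap m.E r := by
  rcases m.pos_mem_segment_union t with hpos | hpos
  · have := m.sharesEdge_start_mid.overlap_or_of_mem_segment hpos h
    tauto
  · rcases m.legs with ⟨hIE, -⟩ | ⟨-, hIE, -⟩
    · rw [hIE, segment_same, mem_singleton_iff] at hpos
      rw [hpos] at h
      tauto
    · have := hIE.overlap_or_of_mem_segment hpos h
      tauto

lemma mem_corridor_of_overlap_mid {a b : ℝ × ℝ} (hab : SharesEdge a b) (h : Overlap m.I a) :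
    m.S ∈ corridor a b ∨ m.E ∈ corridor a b := by
  rcases m.legs with ⟨hIE, -⟩ | ⟨hSI, hIE, hne₁, hne₂⟩
  · exact .inr (hIE ▸ mem_corridor_of_overlap_left h)
  -- The two legs are perpendicular, so one of them is parallel to `b - a`.
  have hparallel : m.S = m.I + (b - a) ∨ m.S = m.I - (b - a) ∨
      m.E = m.I + (b - a) ∨ m.E = m.I - (b - a) := by
    simp only [SharesEdge, Prod.ext_iff, Prod.fst_add, Prod.snd_add, Prod.fst_sub,
      Prod.snd_sub] at *
    grind
  have hadd := add_sub_mem_corridor_of_overlap (b := b) h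
  have hsub := sub_sub_mem_corridor_of_overlap (b := b) h
  rcases hparallel with hI | hI | hI | hI <;> simp only [hI, hadd, hsub, true_or, or_true]

lemma mem_corridor_of_overlap_pos {a b : ℝ × ℝ} {t : ℝ} (hab : SharesEdge a b)
    (h : Overlap (m.pos t) a) : m.S ∈ corridor a b ∨ m.E ∈ corridor a b := by
  rcases overlap_or_of_overlap_pos h with hS | hI | hE
  · exact .inl (mem_corridor_of_overlap_left hS)
  · exact mem_corridor_of_overlap_mid hab hI
  · exact .inr (mem_corridor_of_overlap_left hE)

end Movement

namespace TransitionInstance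

variable {k n : ℕ} (T : TransitionInstance k n)

/-- The labeling `L₁`: the positions of all labels before the transition. -/
def startPos : Fin k ⊕ Fin n → ℝ × ℝ := Sum.elim T.stat fun i => (T.mov i).S

/-- The labeling `L₂`: the positions of all labels after the transition. -/
def endPos : Fin k ⊕ Fin n → ℝ × ℝ := Sum.elim T.stat fun i => (T.mov i).E

variable {T}

lemma mem_corridor_of_overlap_traj {τ : Fin n → ℝ} {j : Fin n} {a : Fin k ⊕ Fin n} {t : ℝ}
    (hnd : (T.mov j).I = (T.mov j).E)
    (hsep : ∀ i, i ≠ j → τ i + (T.mov i).dur ≤ τ j ∨ τ j + (T.mov j).dur ≤ τ i)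
    (ha : a ≠ Sum.inr j) (h : Overlap (traj T τ t a) (traj T τ t (Sum.inr j))) :
    T.startPos a ∈ corridor (T.mov j).S (T.mov j).E ∨
      T.endPos a ∈ corridor (T.mov j).S (T.mov j).E := by
  have hedge : SharesEdge (T.mov j).S (T.mov j).E := hnd ▸ (T.mov j).sharesEdge_start_mid
  have hpos := (T.mov j).pos_mem_segment hnd (t - τ j)
  simp only [traj, Sum.elim_inr] at h
  rcases a with a | i
  · exact .inl (mem_corridor_of_overlap_of_mem_segment hpos h)
  simp only [startPos, endPos, Sum.elim_inr] at h ⊢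
  rcases le_or_gt t (τ j) with hbefore | hstarted
  · rw [(T.mov j).pos_of_nonpos (by linarith)] at h
    exact Movement.mem_corridor_of_overlap_pos hedge h
  rcases le_or_gt (τ j + (T.mov j).dur) t with hafter | hrunning
  · rw [(T.mov j).pos_of_dur_le (by linarith)] at h
    rw [corridor_comm]
    exact Movement.mem_corridor_of_overlap_pos hedge.symm h
  rcases hsep i (fun hij => ha (congrArg Sum.inr hij)) with hij | hji
  · rw [(T.mov i).pos_of_dur_le (by linarith)] at h
    exact .inr (mem_corridor_of_overlap_of_mem_segment hpos h)
  · rw [(T.mov i).pos_of_nonpos (by linarith)] at h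
    exact .inl (mem_corridor_of_overlap_of_mem_segment hpos h)

end TransitionInstance

theorem consecutive_nondiagonal_degree_le_general {k n : ℕ} (T : TransitionInstance k n)
    (τ : Fin n → ℝ) (j : Fin n) (hnd : (T.mov j).I = (T.mov j).E)
    (hsep : ∀ i, i ≠ j → τ i + (T.mov i).dur ≤ τ j ∨ τ j + (T.mov j).dur ≤ τ i) :
    {a : Fin k ⊕ Fin n | a ≠ Sum.inr j ∧
      ∃ t : ℝ, Overlap (traj T τ t a) (traj T τ t (Sum.inr j))}.ncard ≤ 12 := by
  have hedge : SharesEdge (T.mov j).S (T.mov j).E := hnd ▸ (T.mov j).sharesEdge_start_mid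
  set C := corridor (T.mov j).S (T.mov j).E with hC
  have hstart : {a | a ≠ Sum.inr j ∧ T.startPos a ∈ C}.encard ≤ 6 :=
    encard_le_six_of_mem_corridor hedge (fun _ ha => ha.2)
      (fun _ ha => T.free_start _ (Sum.inr j) ha.1) fun _ _ _ _ hne => T.free_start _ _ hne
  have hend : {a | a ≠ Sum.inr j ∧ T.endPos a ∈ C}.encard ≤ 6 := by
    rw [hC, corridor_comm]
    exact encard_le_six_of_mem_corridor hedge.symm (fun _ ha => ha.2)
      (fun _ ha => T.free_end _ (Sum.inr j) ha.1) fun _ _ _ _ hne => T.free_end _ _ hne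
  rw [← Nat.cast_le (α := ℕ∞), (toFinite _).cast_ncard_eq]
  calc _ ≤ ({a | a ≠ Sum.inr j ∧ T.startPos a ∈ C} ∪
        {a | a ≠ Sum.inr j ∧ T.endPos a ∈ C}).encard := encard_le_encard <| by
        rintro a ⟨ha, t, ht⟩
        exact (TransitionInstance.mem_corridor_of_overlap_traj hnd hsep ha ht).imp
          (.intro ha) (.intro ha)
    _ ≤ 6 + 6 := (encard_union_le _ _).trans (add_le_add hstart hend)
    _ = (12 : ℕ) := by norm_num

/-- In a consecutive transition, a moving label whose movement is non-diagonal (its start and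
end positions share an edge) overlaps at most `12` other labels during the entire transition. -/
theorem consecutive_nondiagonal_degree_le {k n : ℕ} (T : TransitionInstance k n) (τ : Fin n → ℝ)
    (hcons : Consecutive T τ) (j : Fin n) (hnd : (T.mov j).I = (T.mov j).E) :
    {a : Fin k ⊕ Fin n | a ≠ Sum.inr j ∧
      ∃ t : ℝ, Overlap (traj T τ t a) (traj T τ t (Sum.inr j))}.ncard ≤ 12 := by
  exact consecutive_nondiagonal_degree_le_general T τ j hnd fun i hij => hcons i j hij
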